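/- For positive integers d and 1 ≤ a ≤ d+1, the following identity holds in the ring of formal power series ℤ[[q]]: (1 − q − q^{d+1})² · ∑_{n≥1} E(f_d^{(a)}(n), h_d^{(a)}(n)) qⁿ = q^{a+1} − q^{a+1+d}. -/

import Mathlib

open Multiset Finset Filter

/-- A partition is encoded as a nonempty multiset of positive integers (its parts). -/
def IsPartition (M : Multiset ℕ) : Prop := M ≠ 0 ∧ ∀ x ∈ M, 0 < x

/-- The perimeter of a partition: (largest part) + (number of parts) - 1. -/
def perim (M : Multiset ℕ) : ℕ := M.sup + Multiset.card M - 1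

/-- `rP n P` counts the partitions (of any sum) with perimeter `n` satisfying `P`. -/
noncomputable def rP (n : ℕ) (P : Multiset ℕ → Prop) : ℕ :=
  Set.ncard {M : Multiset ℕ | IsPartition M ∧ perim M = n ∧ P M}

/-- `fP d a n`: partitions of perimeter n with every part ≡ a (mod d+1). -/
noncomputable def fP (d a n : ℕ) : ℕ :=
  rP n (fun M => ∀ x ∈ M, x % (d + 1) = a % (d + 1))

/-- `hP d a n`: partitions of perimeter n with d-distinct parts, all parts ≥ a. -/
noncomputable def hP (d a n : ℕ) : ℕ :=
  rP n (fun M => M.Nodup ∧ (∀ x ∈ M, a ≤ x) ∧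
    ∀ x ∈ M, ∀ y ∈ M, x ≠ y → d ≤ max x y - min x y)

/-- The set of partitions counted by `fP d a n`. -/
def fSet (d a n : ℕ) : Set (Multiset ℕ) :=
  {M | IsPartition M ∧ perim M = n ∧ ∀ x ∈ M, x % (d + 1) = a % (d + 1)}

/-- The set of partitions counted by `hP d a n`. -/
def hSet (d a n : ℕ) : Set (Multiset ℕ) :=
  {M | IsPartition M ∧ perim M = n ∧ M.Nodup ∧ (∀ x ∈ M, a ≤ x) ∧
    ∀ x ∈ M, ∀ y ∈ M, x ≠ y → d ≤ max x y - min x y}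

/-- The excess of the total number of parts over partitions counted by `fP d a n`
over the total number of parts over partitions counted by `hP d a n`. -/
noncomputable def Efh (d a n : ℕ) : ℤ :=
  (∑ᶠ M ∈ fSet d a n, (Multiset.card M : ℤ)) - ∑ᶠ M ∈ hSet d a n, (Multiset.card M : ℤ)

/-!
Let `C` be the class of partitions generated from the one-part partition `{a}` by two moves: raising
the largest part by `r > 0`, and adding a new largest part exceeding the old one by `k`. Every
member of `C` arises in exactly one way, and the moves increase the perimeter by `r` and `k + 1`, so
the generating series `F` of `C` and `G` of the number of parts over `C` satisfy
`F = q ^ a + q ^ r F + q ^ (k + 1) F` and `G = q ^ a + q ^ r G + q ^ (k + 1) (G + F)`, whence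
`(1 - q ^ r - q ^ (k + 1)) ^ 2 G = q ^ a (1 - q ^ r)`. The partitions into parts `≡ a` modulo
`d + 1` are the case `(r, k) = (d + 1, 0)`, and the `d`-distinct ones with parts `≥ a` are the case
`(r, k) = (1, d)`; both cases have the same denominator.
-/

section WeightSeries

variable {α β R : Type*} [Semiring R] {size : α → ℕ} {S T : Set α} {w w' : α → R}

/-- The generating series of the weight `w` over the members of `S`, graded by `size`. A coefficient
is a `finsum`, hence meaningful only when `w` has finite support on the corresponding fibre. -/
noncomputable def weightSeries (size : α → ℕ) (S : Set α) (w : α → R) : PowerSeries R :=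
  PowerSeries.mk fun n => ∑ᶠ x ∈ {x ∈ S | size x = n}, w x

theorem coeff_weightSeries (size : α → ℕ) (S : Set α) (w : α → R) (n : ℕ) :
    PowerSeries.coeff n (weightSeries size S w) = ∑ᶠ x ∈ {x ∈ S | size x = n}, w x :=
  PowerSeries.coeff_mk _ _

theorem weightSeries_congr (h : Set.EqOn w w' S) :
    weightSeries size S w = weightSeries size S w' := by
  ext n
  rw [coeff_weightSeries, coeff_weightSeries]
  exact finsum_mem_congr rfl fun x hx => h hx.1

theorem weightSeries_singleton (size : α → ℕ) (x : α) (w : α → R) :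
    weightSeries size {x} w = PowerSeries.monomial (size x) (w x) := by
  ext n
  rw [coeff_weightSeries, PowerSeries.coeff_monomial]
  split_ifs with h
  · have fibre : {y ∈ ({x} : Set α) | size y = n} = {x} := by
      ext y
      simp +contextual [h]
    rw [fibre, finsum_mem_singleton]
  · refine finsum_mem_of_eqOn_zero ?_
    rintro y ⟨rfl, hy⟩
    exact absurd hy.symm h

theorem weightSeries_union (hsize : ∀ n, {x | size x = n}.Finite) (hST : Disjoint S T) :
    weightSeries size (S ∪ T) w = weightSeries size S w + weightSeries size T w := by
  ext n
  have fibre : {x ∈ S ∪ T | size x = n} =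
      {x ∈ S | size x = n} ∪ {x ∈ T | size x = n} := by
    ext x
    exact or_and_right
  rw [_root_.map_add, coeff_weightSeries, coeff_weightSeries, coeff_weightSeries, fibre]
  exact finsum_mem_union (hST.mono (Set.sep_subset S _) (Set.sep_subset T _))
    ((hsize n).subset fun _ => And.right) ((hsize n).subset fun _ => And.right)

theorem weightSeries_add (hsize : ∀ n, {x | size x = n}.Finite) :
    weightSeries size S (w + w') = weightSeries size S w + weightSeries size S w' := by
  ext n
  rw [_root_.map_add, coeff_weightSeries, coeff_weightSeries, coeff_weightSeries]
  exact finsum_mem_add_distrib ((hsize n).subset fun _ => And.right)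

theorem weightSeries_image {size' : β → ℕ} {φ : α → β} {s : ℕ} (w : β → R) (hφ : S.InjOn φ)
    (hsize : ∀ x ∈ S, size' (φ x) = size x + s) :
    weightSeries size' (φ '' S) w = PowerSeries.X ^ s * weightSeries size S (w ∘ φ) := by
  ext n
  have fibre : {y ∈ φ '' S | size' y = n} = φ '' {x ∈ S | size x + s = n} := by
    ext y
    constructor
    · rintro ⟨⟨x, hx, rfl⟩, hn⟩
      exact ⟨x, ⟨hx, hsize x hx ▸ hn⟩, rfl⟩
    · rintro ⟨x, ⟨hx, hn⟩, rfl⟩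
      exact ⟨⟨x, hx, rfl⟩, (hsize x hx).trans hn⟩
  rw [coeff_weightSeries, PowerSeries.coeff_X_pow_mul', coeff_weightSeries, fibre,
    finsum_mem_image (hφ.mono (Set.sep_subset S _))]
  split_ifs with hs
  · simp only [Function.comp_apply, eq_tsub_iff_add_eq_of_le hs]
  · refine finsum_mem_of_eqOn_zero ?_
    rintro x ⟨-, hn⟩
    omega

end WeightSeries

theorem multiset_sup_cons_of_le {α : Type*} [SemilatticeSup α] [OrderBot α] {L : α}
    {T : Multiset α} (hT : ∀ x ∈ T, x ≤ L) : (L ::ₘ T).sup = L := by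
  rw [Multiset.sup_cons, sup_eq_left]
  exact Multiset.sup_le.2 hT

theorem multiset_sup_mem {α : Type*} [LinearOrder α] [OrderBot α] {M : Multiset α} (hM : M ≠ 0) :
    M.sup ∈ M := by
  obtain ⟨x, hx, hsup⟩ := Finset.sup_mem_of_nonempty (f := id) (Multiset.toFinset_nonempty.2 hM)
  rw [Finset.sup_def, Multiset.map_id, Multiset.toFinset_val, Multiset.sup_dedup] at hsup
  exact hsup ▸ Multiset.mem_toFinset.1 hx

theorem multiset_induction_on_max {α : Type*} [LinearOrder α] {p : Multiset α → Prop} (zero : p 0)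
    (cons : ∀ (L : α) (T : Multiset α), (∀ x ∈ T, x ≤ L) → p T → p (L ::ₘ T))
    (M : Multiset α) : p M := by
  induction M using Multiset.strongInductionOn with
  | ih M ih =>
    rcases eq_or_ne M 0 with rfl | hM
    · exact zero
    · obtain ⟨L, hL, hmax⟩ := M.toFinset.exists_max_image id (Multiset.toFinset_nonempty.2 hM)
      simp only [Multiset.mem_toFinset, id_eq] at hL hmax
      rw [← Multiset.cons_erase hL]
      exact cons _ _ (fun x hx => hmax x (Multiset.mem_of_mem_erase hx))
        (ih _ (Multiset.erase_lt.2 hL))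

theorem finite_setOf_perim_eq (n : ℕ) : {M | perim M = n}.Finite := by
  refine (Set.finite_Iic ((n + 1) • Multiset.range (n + 1))).subset fun M (hM : perim M = n) => ?_
  rw [Set.mem_Iic, Multiset.le_iff_count]
  intro x
  rw [Multiset.count_nsmul]
  rcases Nat.eq_zero_or_pos (M.count x) with h0 | hpos
  · omega
  · have hle_sup : x ≤ M.sup := Multiset.le_sup (Multiset.count_pos.1 hpos)
    have hle_card := Multiset.count_le_card x M
    have hperim : M.sup + Multiset.card M - 1 = n := hM
    rw [Multiset.count_eq_one_of_mem (Multiset.nodup_range _) (Multiset.mem_range.2 (by omega))]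
    omega

theorem IsPartition.perim_pos {M : Multiset ℕ} (hM : IsPartition M) : 0 < perim M := by
  have hcard := Multiset.card_pos.2 hM.1
  have hsup := hM.2 _ (multiset_sup_mem hM.1)
  unfold perim
  omega

/-- Raise the largest part by `r`. -/
def raiseMax (r : ℕ) (M : Multiset ℕ) : Multiset ℕ := (M.sup + r) ::ₘ M.erase M.sup

/-- Add a new largest part, exceeding the old one by `k`. -/
def addMax (k : ℕ) (M : Multiset ℕ) : Multiset ℕ := (M.sup + k) ::ₘ M

section Moves

variable {M N : Multiset ℕ} {r k : ℕ}

theorem le_sup_of_mem_erase {x : ℕ} (hx : x ∈ M.erase M.sup) : x ≤ M.sup :=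
  Multiset.le_sup (Multiset.mem_of_mem_erase hx)

theorem raiseMax_cons_of_le {L : ℕ} {T : Multiset ℕ} (hT : ∀ x ∈ T, x ≤ L) :
    raiseMax r (L ::ₘ T) = (L + r) ::ₘ T := by
  rw [raiseMax, multiset_sup_cons_of_le hT, Multiset.erase_cons_head]

theorem sup_raiseMax (r : ℕ) (M : Multiset ℕ) : (raiseMax r M).sup = M.sup + r :=
  multiset_sup_cons_of_le fun _ hx => (le_sup_of_mem_erase hx).trans (Nat.le_add_right _ _)

theorem sup_addMax (k : ℕ) (M : Multiset ℕ) : (addMax k M).sup = M.sup + k :=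
  multiset_sup_cons_of_le fun _ hx => (Multiset.le_sup hx).trans (Nat.le_add_right _ _)

theorem erase_sup_raiseMax (r : ℕ) (M : Multiset ℕ) :
    (raiseMax r M).erase (raiseMax r M).sup = M.erase M.sup := by
  rw [sup_raiseMax, raiseMax, Multiset.erase_cons_head]

theorem erase_sup_addMax (k : ℕ) (M : Multiset ℕ) :
    (addMax k M).erase (addMax k M).sup = M := by
  rw [sup_addMax, addMax, Multiset.erase_cons_head]

theorem card_raiseMax (hM : M ≠ 0) : Multiset.card (raiseMax r M) = Multiset.card M := by
  rw [raiseMax, Multiset.card_cons, Multiset.card_erase_add_one (multiset_sup_mem hM)]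

theorem card_addMax (k : ℕ) (M : Multiset ℕ) :
    Multiset.card (addMax k M) = Multiset.card M + 1 :=
  Multiset.card_cons _ _

theorem perim_raiseMax (hM : M ≠ 0) : perim (raiseMax r M) = perim M + r := by
  have := Multiset.card_pos.2 hM
  rw [perim, perim, sup_raiseMax, card_raiseMax hM]
  omega

theorem perim_addMax (hM : M ≠ 0) : perim (addMax k M) = perim M + (k + 1) := by
  have := Multiset.card_pos.2 hM
  rw [perim, perim, sup_addMax, card_addMax]
  omega

theorem raiseMax_injOn (r : ℕ) : Set.InjOn (raiseMax r) {M | M ≠ 0} := by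
  intro M hM N hN h
  have hsup : M.sup = N.sup := by
    simpa only [sup_raiseMax, Nat.add_right_cancel_iff] using congrArg Multiset.sup h
  have herase : M.erase M.sup = N.erase N.sup := by
    rw [← erase_sup_raiseMax r M, h, erase_sup_raiseMax]
  rw [← Multiset.cons_erase (multiset_sup_mem hM), herase, hsup,
    Multiset.cons_erase (multiset_sup_mem hN)]

theorem addMax_injective (k : ℕ) : Function.Injective (addMax k) := by
  intro M N h
  rw [← erase_sup_addMax k M, h, erase_sup_addMax]

end Moves

/-- The partitions generated from `{a}` by the moves `raiseMax r` and `addMax k`; in other words,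
those whose smallest part lies in `a + r ℕ` and whose successive differences lie in `k + r ℕ`. -/
inductive IsGrown (a r k : ℕ) : Multiset ℕ → Prop
  | singleton : IsGrown a r k {a}
  | raise {M : Multiset ℕ} (hM : IsGrown a r k M) : IsGrown a r k (raiseMax r M)
  | add {M : Multiset ℕ} (hM : IsGrown a r k M) : IsGrown a r k (addMax k M)

namespace IsGrown

variable {a r k : ℕ} {M N : Multiset ℕ}

theorem ne_zero (hM : IsGrown a r k M) : M ≠ 0 := by
  cases hM with
  | singleton => exact Multiset.singleton_ne_zero a
  | raise => exact Multiset.cons_ne_zero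
  | add => exact Multiset.cons_ne_zero

theorem forall_mem_of_add {p : ℕ → Prop} (base : p a) (add_raise : ∀ x, p x → p (x + r))
    (add_gap : ∀ x, p x → p (x + k)) (hM : IsGrown a r k M) : ∀ x ∈ M, p x := by
  induction hM with
  | singleton => exact fun x hx => Multiset.mem_singleton.1 hx ▸ base
  | raise hM ih =>
    exact Multiset.forall_mem_cons.2 ⟨add_raise _ (ih _ (multiset_sup_mem hM.ne_zero)),
      fun x hx => ih x (Multiset.mem_of_mem_erase hx)⟩
  | add hM ih =>
    exact Multiset.forall_mem_cons.2 ⟨add_gap _ (ih _ (multiset_sup_mem hM.ne_zero)), ih⟩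

theorem le_of_mem (hM : IsGrown a r k M) : ∀ x ∈ M, a ≤ x :=
  hM.forall_mem_of_add le_rfl (fun _ => Nat.le_add_right_of_le) fun _ => Nat.le_add_right_of_le

theorem add_le_sup_of_mem_erase (hM : IsGrown a r k M) :
    ∀ x ∈ M.erase M.sup, x + k ≤ M.sup := by
  induction hM with
  | singleton => simp
  | raise _ ih =>
    rw [erase_sup_raiseMax, sup_raiseMax]
    exact fun x hx => Nat.le_add_right_of_le (ih x hx)
  | add =>
    rw [erase_sup_addMax, sup_addMax]
    exact fun x hx => Nat.add_le_add_right (Multiset.le_sup hx) k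

theorem raiseMax_ne_singleton (hr : 0 < r) (hM : IsGrown a r k M) : raiseMax r M ≠ {a} := by
  intro h
  have hsup : M.sup + r = a := by rw [← sup_raiseMax, h, Multiset.sup_singleton]
  have := hM.le_of_mem _ (multiset_sup_mem hM.ne_zero)
  omega

theorem addMax_ne_singleton (hM : IsGrown a r k M) : addMax k M ≠ {a} := by
  intro h
  have hcard : Multiset.card M + 1 = 1 := by rw [← card_addMax k, h, Multiset.card_singleton]
  have := Multiset.card_pos.2 hM.ne_zero
  omega

-- After `raiseMax` the two largest parts differ by more than `k`, after `addMax` by exactly `k`.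
theorem raiseMax_ne_addMax (hr : 0 < r) (hM : IsGrown a r k M) (hN : N ≠ 0) :
    raiseMax r M ≠ addMax k N := by
  intro h
  have hsup : M.sup + r = N.sup + k := by rw [← sup_raiseMax, h, sup_addMax]
  have herase : M.erase M.sup = N := by rw [← erase_sup_raiseMax r, h, erase_sup_addMax]
  have := hM.add_le_sup_of_mem_erase N.sup (herase.symm ▸ multiset_sup_mem hN)
  omega

theorem cons_sup_add (hM : IsGrown a r k M) (j : ℕ) :
    IsGrown a r k ((M.sup + k + r * j) ::ₘ M) := by
  induction j with
  | zero => exact hM.add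
  | succ j ih =>
    have hle : ∀ x ∈ M, x ≤ M.sup + k + r * j := fun x hx => by
      have := Multiset.le_sup hx
      omega
    rw [Nat.mul_succ, ← Nat.add_assoc, ← raiseMax_cons_of_le hle]
    exact ih.raise

theorem singleton_add_mul (a r k j : ℕ) : IsGrown a r k {a + r * j} := by
  induction j with
  | zero => exact singleton
  | succ j ih =>
    have hraise : raiseMax r {a + r * j} = {a + r * j + r} :=
      raiseMax_cons_of_le fun x hx => absurd hx (Multiset.notMem_zero x)
    rw [Nat.mul_succ, ← Nat.add_assoc, ← hraise]
    exact ih.raise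

end IsGrown

section GeneratingSeries

variable {R : Type*} {a r : ℕ}

theorem setOf_isGrown_eq_union (a r k : ℕ) :
    {M | IsGrown a r k M} =
      {{a}} ∪ (raiseMax r '' {M | IsGrown a r k M} ∪ addMax k '' {M | IsGrown a r k M}) := by
  ext M
  constructor
  · rintro (_ | hM | hM)
    · exact Or.inl rfl
    · exact Or.inr (Or.inl ⟨_, hM, rfl⟩)
    · exact Or.inr (Or.inr ⟨_, hM, rfl⟩)
  · rintro (rfl | ⟨M, hM, rfl⟩ | ⟨M, hM, rfl⟩)
    · exact IsGrown.singleton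
    · exact IsGrown.raise hM
    · exact IsGrown.add hM

theorem weightSeries_isGrown [Semiring R] (hr : 0 < r) (k : ℕ) (w : Multiset ℕ → R) :
    weightSeries perim {M | IsGrown a r k M} w = PowerSeries.monomial a (w {a}) +
      (PowerSeries.X ^ r * weightSeries perim {M | IsGrown a r k M} (w ∘ raiseMax r) +
        PowerSeries.X ^ (k + 1) * weightSeries perim {M | IsGrown a r k M} (w ∘ addMax k)) := by
  have disjoint_moves :
      Disjoint (raiseMax r '' {M | IsGrown a r k M}) (addMax k '' {M | IsGrown a r k M}) := by
    rw [Set.disjoint_left]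
    rintro _ ⟨M, hM, rfl⟩ ⟨N, hN, h⟩
    exact IsGrown.raiseMax_ne_addMax hr hM (IsGrown.ne_zero hN) h.symm
  have disjoint_singleton : Disjoint {{a}}
      (raiseMax r '' {M | IsGrown a r k M} ∪ addMax k '' {M | IsGrown a r k M}) := by
    rw [Set.disjoint_singleton_left]
    rintro (⟨M, hM, h⟩ | ⟨M, hM, h⟩)
    · exact IsGrown.raiseMax_ne_singleton hr hM h
    · exact IsGrown.addMax_ne_singleton hM h
  have perim_singleton : perim {a} = a := by simp [perim]
  have subset_ne_zero : {M | IsGrown a r k M} ⊆ {M | M ≠ 0} := fun _ => IsGrown.ne_zero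
  conv_lhs => rw [setOf_isGrown_eq_union]
  rw [weightSeries_union finite_setOf_perim_eq disjoint_singleton,
    weightSeries_union finite_setOf_perim_eq disjoint_moves,
    weightSeries_singleton, perim_singleton,
    weightSeries_image w ((raiseMax_injOn r).mono subset_ne_zero)
      fun _ hM => perim_raiseMax (subset_ne_zero hM),
    weightSeries_image w (addMax_injective k).injOn
      fun _ hM => perim_addMax (subset_ne_zero hM)]

theorem sq_mul_weightSeries_card_isGrown [CommRing R] (hr : 0 < r) (k : ℕ) :
    ((1 : PowerSeries R) - PowerSeries.X ^ r - PowerSeries.X ^ (k + 1)) ^ 2 *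
        weightSeries perim {M | IsGrown a r k M} (fun M => (Multiset.card M : R)) =
      PowerSeries.X ^ a * (1 - PowerSeries.X ^ r) := by
  set F : PowerSeries R := weightSeries perim {M | IsGrown a r k M} 1 with hF
  set G : PowerSeries R :=
    weightSeries perim {M | IsGrown a r k M} (fun M => (Multiset.card M : R)) with hG
  have count_eq :
      F = PowerSeries.X ^ a + (PowerSeries.X ^ r * F + PowerSeries.X ^ (k + 1) * F) := by
    rw [PowerSeries.X_pow_eq a]
    exact weightSeries_isGrown hr k 1
  have raise_eq : weightSeries perim {M | IsGrown a r k M}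
      ((fun M => (Multiset.card M : R)) ∘ raiseMax r) = G :=
    weightSeries_congr fun M hM => congrArg Nat.cast (card_raiseMax (IsGrown.ne_zero hM))
  have add_eq : weightSeries perim {M | IsGrown a r k M}
      ((fun M => (Multiset.card M : R)) ∘ addMax k) = G + F := by
    rw [hG, hF, ← weightSeries_add finite_setOf_perim_eq]
    refine weightSeries_congr fun M _ => ?_
    simp only [Function.comp_apply, card_addMax, Nat.cast_add, Nat.cast_one, Pi.add_apply,
      Pi.one_apply]
  have card_eq :
      G = PowerSeries.X ^ a + (PowerSeries.X ^ r * G + PowerSeries.X ^ (k + 1) * (G + F)) := by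
    conv_lhs => rw [hG, weightSeries_isGrown hr, raise_eq, add_eq]
    rw [Multiset.card_singleton, Nat.cast_one, PowerSeries.X_pow_eq a]
  linear_combination (1 - PowerSeries.X ^ r - PowerSeries.X ^ (k + 1)) * card_eq +
    PowerSeries.X ^ (k + 1) * count_eq

end GeneratingSeries

section Congruence

variable {a r : ℕ} {M : Multiset ℕ}

theorem isGrown_zero_of_modEq (hM : M ≠ 0) (h : ∀ x ∈ M, a ≤ x ∧ a ≡ x [MOD r]) :
    IsGrown a r 0 M := by
  induction M using multiset_induction_on_max with
  | zero => exact absurd rfl hM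
  | cons L T hT ih =>
    obtain ⟨⟨haL, hmodL⟩, hmodT⟩ := Multiset.forall_mem_cons.1 h
    rcases eq_or_ne T 0 with rfl | hT0
    · obtain ⟨j, rfl⟩ := (Nat.modEq_iff_exists_eq_add haL).1 hmodL
      exact IsGrown.singleton_add_mul a r 0 j
    · have hsup := multiset_sup_mem hT0
      obtain ⟨j, rfl⟩ :=
        (Nat.modEq_iff_exists_eq_add (hT _ hsup)).1 ((hmodT _ hsup).2.symm.trans hmodL)
      exact (ih hT0 hmodT).cons_sup_add j

theorem isGrown_zero_iff :
    IsGrown a r 0 M ↔ M ≠ 0 ∧ ∀ x ∈ M, a ≤ x ∧ a ≡ x [MOD r] :=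
  ⟨fun hM => ⟨hM.ne_zero, hM.forall_mem_of_add ⟨le_rfl, rfl⟩
      (fun _ hx => ⟨Nat.le_add_right_of_le hx.1, hx.2.trans (Nat.add_modEq_right).symm⟩)
      fun _ => id⟩,
    fun h => isGrown_zero_of_modEq h.1 h.2⟩

theorem le_of_modEq_of_pos {m x : ℕ} (ham : a ≤ m) (hx : 0 < x) (h : a ≡ x [MOD m]) : a ≤ x := by
  by_contra! hlt
  have := Nat.le_of_dvd (by omega) ((Nat.modEq_iff_dvd' hlt.le).1 h.symm)
  omega

theorem fSet_eq_setOf_isGrown {d : ℕ} (ha : 1 ≤ a) (had : a ≤ d + 1) (n : ℕ) :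
    fSet d a n = {M | IsGrown a (d + 1) 0 M ∧ perim M = n} := by
  ext M
  simp only [fSet, Set.mem_ofPred_eq, isGrown_zero_iff, IsPartition]
  constructor
  · rintro ⟨⟨hM, hpos⟩, hn, hmod⟩
    have hmod' : ∀ x ∈ M, a ≡ x [MOD d + 1] := fun x hx => (hmod x hx).symm
    exact ⟨⟨hM, fun x hx => ⟨le_of_modEq_of_pos had (hpos x hx) (hmod' x hx), hmod' x hx⟩⟩, hn⟩
  · rintro ⟨⟨hM, h⟩, hn⟩
    exact ⟨⟨hM, fun x hx => ha.trans (h x hx).1⟩, hn, fun x hx => (h x hx).2.symm⟩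

end Congruence

/-- The parts are distinct and any two of them differ by at least `d`. -/
def IsGapped (d : ℕ) (M : Multiset ℕ) : Prop :=
  M.Nodup ∧ ∀ x ∈ M, ∀ y ∈ M, x ≠ y → d ≤ max x y - min x y

section Gaps

variable {d a L : ℕ} {M T : Multiset ℕ}

theorem isGapped_cons_iff (hd : 0 < d) (hT : ∀ x ∈ T, x ≤ L) :
    IsGapped d (L ::ₘ T) ↔ (∀ x ∈ T, x + d ≤ L) ∧ IsGapped d T := by
  constructor
  · rintro ⟨hnodup, hgap⟩
    obtain ⟨hL, hnodup⟩ := Multiset.nodup_cons.1 hnodup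
    refine ⟨fun x hx => ?_, hnodup, fun x hx y hy =>
      hgap x (Multiset.mem_cons_of_mem hx) y (Multiset.mem_cons_of_mem hy)⟩
    have hxL := hT x hx
    have := hgap x (Multiset.mem_cons_of_mem hx) L (Multiset.mem_cons_self L T)
      (ne_of_mem_of_not_mem hx hL)
    omega
  · rintro ⟨hlow, hnodup, hgap⟩
    refine ⟨Multiset.nodup_cons.2 ⟨fun hL => ?_, hnodup⟩, ?_⟩
    · have := hlow L hL
      omega
    · simp only [Multiset.mem_cons, forall_eq_or_imp]
      refine ⟨⟨fun h => absurd rfl h, fun y hy _ => ?_⟩, fun x hx => ⟨fun _ => ?_, hgap x hx⟩⟩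
      · have := hlow y hy
        omega
      · have := hlow x hx
        omega

theorem IsGrown.isGapped {r : ℕ} (hd : 0 < d) (hM : IsGrown a r d M) : IsGapped d M := by
  induction hM with
  | singleton => exact (isGapped_cons_iff hd (by simp)).2 (by simp [IsGapped])
  | raise hM ih =>
    rw [← Multiset.cons_erase (multiset_sup_mem hM.ne_zero),
      isGapped_cons_iff hd fun _ => le_sup_of_mem_erase] at ih
    refine (isGapped_cons_iff hd fun x hx => ?_).2 ⟨fun x hx => ?_, ih.2⟩
    · exact Nat.le_add_right_of_le (le_sup_of_mem_erase hx)
    · exact Nat.le_add_right_of_le (ih.1 x hx)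
  | add _ ih =>
    exact (isGapped_cons_iff hd fun x hx => Nat.le_add_right_of_le (Multiset.le_sup hx)).2
      ⟨fun x hx => Nat.add_le_add_right (Multiset.le_sup hx) d, ih⟩

theorem isGrown_one_of_isGapped (hd : 0 < d) (hM : M ≠ 0) (ha : ∀ x ∈ M, a ≤ x)
    (hgap : IsGapped d M) : IsGrown a 1 d M := by
  induction M using multiset_induction_on_max with
  | zero => exact absurd rfl hM
  | cons L T hT ih =>
    obtain ⟨haL, haT⟩ := Multiset.forall_mem_cons.1 ha
    obtain ⟨hlow, hgapT⟩ := (isGapped_cons_iff hd hT).1 hgap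
    rcases eq_or_ne T 0 with rfl | hT0
    · obtain ⟨j, rfl⟩ := Nat.exists_eq_add_of_le haL
      simpa only [one_mul] using! IsGrown.singleton_add_mul a 1 d j
    · obtain ⟨j, rfl⟩ := Nat.exists_eq_add_of_le (hlow _ (multiset_sup_mem hT0))
      simpa only [one_mul] using (ih hT0 haT hgapT).cons_sup_add j

theorem isGrown_one_iff (hd : 0 < d) :
    IsGrown a 1 d M ↔ M ≠ 0 ∧ (∀ x ∈ M, a ≤ x) ∧ IsGapped d M :=
  ⟨fun hM => ⟨hM.ne_zero, hM.le_of_mem, hM.isGapped hd⟩,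
    fun ⟨hM, ha, hgap⟩ => isGrown_one_of_isGapped hd hM ha hgap⟩

theorem hSet_eq_setOf_isGrown (hd : 1 ≤ d) (ha : 1 ≤ a) (n : ℕ) :
    hSet d a n = {M | IsGrown a 1 d M ∧ perim M = n} := by
  ext M
  simp only [hSet, Set.mem_ofPred_eq, isGrown_one_iff hd, IsPartition, IsGapped]
  constructor
  · rintro ⟨⟨hM, -⟩, hn, hnodup, hle, hgap⟩
    exact ⟨⟨hM, hle, hnodup, hgap⟩, hn⟩
  · rintro ⟨⟨hM, hle, hnodup, hgap⟩, hn⟩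
    exact ⟨⟨hM, fun x hx => ha.trans (hle x hx)⟩, hn, hnodup, hle, hgap⟩

end Gaps

theorem Efh_zero (d a : ℕ) : Efh d a 0 = 0 := by
  have fSet_zero : fSet d a 0 = ∅ :=
    Set.eq_empty_of_forall_notMem fun _ hM => hM.1.perim_pos.ne' hM.2.1
  have hSet_zero : hSet d a 0 = ∅ :=
    Set.eq_empty_of_forall_notMem fun _ hM => hM.1.perim_pos.ne' hM.2.1
  rw [Efh, fSet_zero, hSet_zero, finsum_mem_empty, sub_zero]

theorem mk_Efh_eq_sub {d a : ℕ} (hd : 1 ≤ d) (ha : 1 ≤ a) (had : a ≤ d + 1) :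
    PowerSeries.mk (Efh d a) =
      weightSeries perim {M | IsGrown a (d + 1) 0 M} (fun M => (Multiset.card M : ℤ)) -
        weightSeries perim {M | IsGrown a 1 d M} (fun M => (Multiset.card M : ℤ)) := by
  ext n
  rw [_root_.map_sub, PowerSeries.coeff_mk, coeff_weightSeries, coeff_weightSeries, Efh,
    fSet_eq_setOf_isGrown ha had, hSet_eq_setOf_isGrown hd ha]
  rfl

theorem stmt_17 (d a : ℕ) (hd : 1 ≤ d) (ha1 : 1 ≤ a) (ha2 : a ≤ d + 1) :
    ((1 : PowerSeries ℤ) - PowerSeries.X - PowerSeries.X ^ (d + 1)) ^ 2 *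
        PowerSeries.mk (fun n => if n = 0 then 0 else Efh d a n) =
      PowerSeries.X ^ (a + 1) - PowerSeries.X ^ (a + 1 + d) := by
  have drop_ite : (fun n => if n = 0 then 0 else Efh d a n) = Efh d a := by
    funext n
    split_ifs with hn
    · rw [hn, Efh_zero]
    · rfl
  have congruent_parts := sq_mul_weightSeries_card_isGrown (R := ℤ) (a := a) d.succ_pos 0
  have gapped_parts := sq_mul_weightSeries_card_isGrown (R := ℤ) (a := a) one_pos d
  simp only [Nat.succ_eq_add_one, zero_add, pow_one] at congruent_parts gapped_parts
  rw [drop_ite, mk_Efh_eq_sub hd ha1 ha2]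
  linear_combination congruent_parts - gapped_parts
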